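/- The number of distinct 2×2 unitary matrices expressible as a product of matrices from {H, P, T} containing at most n occurrences of T is exactly 192·(3·2ⁿ − 2). -/

import Mathlib

/-!
The argument is the Matsumoto–Amano normal form, read as a count of balls in a 3-regular tree.

*Existence.* Let `C = Mset 0` be the Clifford group generated by `H` and `P`. Define `V 0 = C` and
`V (k+1) = HT·V k ∪ PHT·V k`. Each `V k` is stable under left multiplication by `P`, `X` and the
scalar `ω = exp (iπ/4)`, because these can be moved past `HT` and `PHT` (`V_mul`). It follows that
`⋃ₖ (T·V k ∪ V (k+1)) ∪ C` is stable under `H`, `P` and `T`, which gives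
`Mset (n+1) = Mset n ∪ (T·V n ∪ V (n+1))` (`Mset_succ`).

*Uniqueness.* For a matrix `U` consider the conjugates `U† X U`, `U† Y U`, `U† Z U`, i.e. the rows of
the rotation of the Bloch sphere given by `U`. Left multiplication by `H` or `P` permutes them up to
sign, and left multiplication by `T` replaces the first two, `x` and `y`, by `(x - y)/√2` and
`(x + y)/√2`. With at most `n` factors `T` all three lie in `√2⁻ⁿ L`, where `L` is a lattice of
matrices with coordinates in `ℤ[√2]`. For `U ∈ V n`, the matrix `(U†XU - U†YU)/√2` is *not* in
`√2⁻ⁿ L` (`V_bloch`). Hence exactly one of the three conjugates belongs to `√2⁻ⁿ L` when `U` is in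
`T·V n`, `HT·V n` or `PHT·V n`: the third, the first and the second respectively. So these three
sets are disjoint from each other and from `Mset n`, and `|Mset (n+1)| = |Mset n| + 3 · 2ⁿ · |C|`.

*The Clifford group.* `C` is the disjoint union of `D`, `HD` and `PHD`, where `D` is the group of the
64 monomial matrices with nonzero entries `u`, `uw`, `u⁸ = w⁴ = 1`; hence `|C| = 192`.
-/

open Matrix

noncomputable section

abbrev Mat := Matrix (Fin 2) (Fin 2) ℂ

/-- The Hadamard gate. -/
def Hg : Mat := ((Real.sqrt 2)⁻¹ : ℝ) • !![1, 1; 1, -1]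

/-- The phase gate. -/
def Pg : Mat := !![1, 0; 0, Complex.I]

/-- The π/8 gate. -/
def Tg : Mat := !![1, 0; 0, Complex.exp ((Real.pi / 4 : ℝ) * Complex.I)]

/-- The Pauli matrices. -/
def Xg : Mat := !![0, 1; 1, 0]
def Yg : Mat := !![0, -Complex.I; Complex.I, 0]
def Zg : Mat := !![1, 0; 0, -1]

/-- The three gates H, P, T. -/
def gate : Fin 3 → Mat := ![Hg, Pg, Tg]

/-- M n: all finite products of matrices from {H, P, T} in which at most n
factors equal T (the empty product being the identity). -/
def Mset (n : ℕ) : Set Mat :=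
  {A | ∃ l : List (Fin 3), l.count 2 ≤ n ∧ A = (l.map gate).prod}

/-! ### Identities between the gates -/

/-- The primitive eighth root of unity `exp (iπ/4)`. -/
def om : ℂ := Complex.exp ((Real.pi / 4 : ℝ) * Complex.I)

/-- The complex number `1/√2`. -/
def sh : ℂ := (((Real.sqrt 2)⁻¹ : ℝ) : ℂ)

lemma sh_sq : sh ^ 2 = 1 / 2 := by
  unfold sh
  rw [← Complex.ofReal_pow, inv_pow, Real.sq_sqrt (by norm_num)]
  norm_num

lemma sh_ne : sh ≠ 0 := by
  intro h
  have := sh_sq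
  simp [h] at this

lemma om_eq : om = sh * (1 + Complex.I) := by
  unfold om sh
  rw [Complex.exp_mul_I, ← Complex.ofReal_cos, ← Complex.ofReal_sin, Real.cos_pi_div_four,
    Real.sin_pi_div_four]
  have : √2 / 2 = (√2)⁻¹ := by
    have h : √2 * √2 = 2 := Real.mul_self_sqrt (by norm_num)
    field_simp
    nlinarith
  rw [this]
  ring

lemma om_prim : IsPrimitiveRoot om 8 := by
  have := Complex.isPrimitiveRoot_exp 8 (by norm_num)
  convert this using 1
  unfold om
  congr 1
  push_cast
  ring

lemma Hg_eq : Hg = !![sh, sh; sh, -sh] := by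
  unfold Hg sh
  ext i j
  fin_cases i <;> fin_cases j <;> simp

lemma Tg_eq : Tg = !![1, 0; 0, om] := rfl

lemma om_sq : om ^ 2 = Complex.I := by
  rw [om_eq]
  linear_combination (1 + Complex.I) ^ 2 * sh_sq + (1 / 2) * Complex.I_sq

lemma HH : Hg * Hg = 1 := by
  rw [Hg_eq, Matrix.one_fin_two]
  ext i j
  fin_cases i <;> fin_cases j <;> simp <;> linear_combination 2 * sh_sq

lemma PPH : Pg * (Pg * Hg) = Hg * Xg := by
  rw [Hg_eq, Pg, Xg]
  ext i j
  fin_cases i <;> fin_cases j <;> simp <;> ring_nf <;> simp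

lemma HPH : Hg * (Pg * Hg) = om • (Pg * (Hg * (Xg * (Pg * (Pg * Pg))))) := by
  rw [Hg_eq, Pg, Xg, om_eq]
  have := sh_sq
  have := Complex.I_sq
  ext i j
  fin_cases i <;> fin_cases j <;> simp <;> grind

lemma XH : Xg * Hg = Hg * (Pg * Pg) := by
  rw [Hg_eq, Pg, Xg]
  ext i j
  fin_cases i <;> fin_cases j <;> simp

lemma XPH : Xg * (Pg * Hg) = (om ^ 2) • (Pg * (Hg * (Xg * (Pg * Pg)))) := by
  rw [om_sq, Hg_eq, Pg, Xg]
  have := Complex.I_sq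
  ext i j
  fin_cases i <;> fin_cases j <;> simp <;> grind

lemma TT : Tg * Tg = Pg := by
  rw [Tg_eq, Pg]
  ext i j
  fin_cases i <;> fin_cases j <;> simp <;> linear_combination om_sq

lemma PT : Pg * Tg = Tg * Pg := by
  rw [← TT, mul_assoc]

lemma XT : Xg * Tg = om • (Tg * (Pg * (Pg * (Pg * Xg)))) := by
  rw [Tg_eq, Pg, Xg]
  have := om_sq
  have := Complex.I_sq
  ext i j
  fin_cases i <;> fin_cases j <;> simp <;> grind

lemma PPPP : Pg * (Pg * (Pg * Pg)) = 1 := by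
  rw [Pg, Matrix.one_fin_two]
  ext i j
  fin_cases i <;> fin_cases j <;> simp

lemma Hg_inj : Function.Injective (fun A : Mat => Hg * A) := by
  intro A B h
  simpa [← mul_assoc, HH] using congrArg (Hg * ·) h

lemma Pg_inj : Function.Injective (fun A : Mat => Pg * A) := by
  intro A B h
  have := congrArg (fun A => Pg * (Pg * (Pg * A))) h
  simpa only [← mul_assoc, show Pg * Pg * Pg * Pg = 1 by simpa [mul_assoc] using PPPP,
    one_mul] using this

lemma Tg_inj : Function.Injective (fun A : Mat => Tg * A) := by
  intro A B h
  apply Pg_inj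
  simpa [← mul_assoc, TT] using congrArg (Tg * ·) h

lemma HT_inj : Function.Injective (fun A : Mat => Hg * (Tg * A)) := Hg_inj.comp Tg_inj

lemma PH_inj : Function.Injective (fun A : Mat => Pg * (Hg * A)) := Pg_inj.comp Hg_inj

lemma PHT_inj : Function.Injective (fun A : Mat => Pg * (Hg * (Tg * A))) := Pg_inj.comp HT_inj

/-! ### Closure properties of the sets `Mset n` -/

lemma one_mem_Mset (n : ℕ) : (1 : Mat) ∈ Mset n := ⟨[], by simp, by simp⟩

lemma Mset_mono {m n : ℕ} (h : m ≤ n) : Mset m ⊆ Mset n :=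
  fun _ ⟨l, hl, e⟩ => ⟨l, hl.trans h, e⟩

lemma Hg_mul_mem {n : ℕ} {A : Mat} (h : A ∈ Mset n) : Hg * A ∈ Mset n := by
  obtain ⟨l, hl, rfl⟩ := h
  exact ⟨0 :: l, by simpa using hl, by simp [gate]⟩

lemma Pg_mul_mem {n : ℕ} {A : Mat} (h : A ∈ Mset n) : Pg * A ∈ Mset n := by
  obtain ⟨l, hl, rfl⟩ := h
  exact ⟨1 :: l, by simpa using hl, by simp [gate]⟩

lemma Tg_mul_mem {n : ℕ} {A : Mat} (h : A ∈ Mset n) : Tg * A ∈ Mset (n + 1) := by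
  obtain ⟨l, hl, rfl⟩ := h
  exact ⟨2 :: l, by simpa using hl, by simp [gate]⟩

lemma Xg_mul_mem {n : ℕ} {A : Mat} (h : A ∈ Mset n) : Xg * A ∈ Mset n := by
  have e : Xg = Hg * (Pg * (Pg * Hg)) := by rw [PPH, ← mul_assoc, HH, one_mul]
  rw [e]
  simp only [mul_assoc]
  exact Hg_mul_mem (Pg_mul_mem (Pg_mul_mem (Hg_mul_mem h)))

lemma om_smul_mem {n : ℕ} {A : Mat} (h : A ∈ Mset n) : om • A ∈ Mset n := by
  have e : om • (1 : Mat) = Hg * (Pg * (Hg * (Pg * (Hg * Pg)))) := by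
    rw [Hg_eq, Pg, om_eq, Matrix.one_fin_two]
    have := sh_sq
    have := Complex.I_sq
    ext i j
    fin_cases i <;> fin_cases j <;> simp <;> grind
  have e2 : om • A = Hg * (Pg * (Hg * (Pg * (Hg * (Pg * A))))) := by
    calc om • A = (om • (1 : Mat)) * A := by simp
      _ = _ := by rw [e]; simp only [mul_assoc]
  rw [e2]
  exact Hg_mul_mem (Pg_mul_mem (Hg_mul_mem (Pg_mul_mem (Hg_mul_mem (Pg_mul_mem h)))))

/-- Induction over products of gates, keeping track of the number of factors `T`. -/
lemma Mset_induction {p : ℕ → Mat → Prop} (h1 : p 0 1)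
    (hH : ∀ n A, p n A → p n (Hg * A)) (hP : ∀ n A, p n A → p n (Pg * A))
    (hT : ∀ n A, p n A → p (n + 1) (Tg * A)) (hm : ∀ n A, p n A → p (n + 1) A)
    {n : ℕ} {A : Mat} (h : A ∈ Mset n) : p n A := by
  obtain ⟨l, hl, rfl⟩ := h
  have key : p (l.count 2) (l.map gate).prod := by
    clear hl
    induction l with
    | nil => simpa using h1
    | cons g l ih =>
      fin_cases g
      · simpa [gate] using hH _ _ ih
      · simpa [gate] using hP _ _ ih
      · simpa [gate] using hT _ _ ih
  exact Nat.le_induction key (fun m _ hp => hm m _ hp) n hl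

/-! ### Existence of normal forms -/

/-- Matsumoto–Amano normal forms with `k` factors `T` whose leftmost syllable is `HT` or `PHT`
(not a bare `T`); for `k = 0` the whole Clifford group. -/
def V : ℕ → Set Mat
  | 0 => Mset 0
  | k + 1 => (fun A => Hg * (Tg * A)) '' V k ∪ (fun A => Pg * (Hg * (Tg * A))) '' V k

/-- `V k` is stable under left multiplication by the group generated by `P`, `X` and `ω`. -/
lemma V_mul (k : ℕ) : (∀ A ∈ V k, om • A ∈ V k) ∧ (∀ A ∈ V k, Pg * A ∈ V k) ∧
    (∀ A ∈ V k, Xg * A ∈ V k) := by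
  induction k with
  | zero => exact ⟨fun _ => om_smul_mem, fun _ => Pg_mul_mem, fun _ => Xg_mul_mem⟩
  | succ k ih =>
    obtain ⟨hω, hP, hX⟩ := ih
    have hXT : ∀ A ∈ V k, ∃ B ∈ V k, Xg * (Tg * A) = Tg * B := fun A hA =>
      ⟨_, hω _ (hP _ (hP _ (hP _ (hX _ hA)))), by
        rw [← mul_assoc, XT]
        simp only [smul_mul_assoc, mul_smul_comm, mul_assoc]⟩
    have hPT : ∀ A, Pg * (Tg * A) = Tg * (Pg * A) := fun A => by
      rw [← mul_assoc, PT, mul_assoc]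
    refine ⟨?_, ?_, ?_⟩
    · rintro _ (⟨A, hA, rfl⟩ | ⟨A, hA, rfl⟩)
      · exact Or.inl ⟨_, hω _ hA, by simp⟩
      · exact Or.inr ⟨_, hω _ hA, by simp⟩
    · rintro _ (⟨A, hA, rfl⟩ | ⟨A, hA, rfl⟩)
      · exact Or.inr ⟨A, hA, rfl⟩
      · obtain ⟨B, hB, e⟩ := hXT A hA
        refine Or.inl ⟨B, hB, ?_⟩
        have := congrArg (· * (Tg * A)) PPH
        simp only [mul_assoc] at this
        simp only [this, e]
    · rintro _ (⟨A, hA, rfl⟩ | ⟨A, hA, rfl⟩)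
      · refine Or.inl ⟨_, hP _ (hP _ hA), ?_⟩
        have := congrArg (· * (Tg * A)) XH
        simp only [mul_assoc] at this
        simp only [this, hPT]
      · obtain ⟨B, hB, e⟩ := hXT _ (hP _ (hP _ hA))
        refine Or.inr ⟨_, hω _ (hω _ hB), ?_⟩
        have := congrArg (· * (Tg * A)) XPH
        simp only [mul_assoc, smul_mul_assoc] at this
        simp only [this, hPT, e, mul_smul_comm, smul_smul, sq]

/-- Normal forms with exactly `k + 1` factors `T`. -/
def W (k : ℕ) : Set Mat := (fun A => Tg * A) '' V k ∪ V (k + 1)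

lemma W_Hg {k : ℕ} {A : Mat} (h : A ∈ W k) : Hg * A ∈ W k := by
  obtain ⟨hω, hP, hX⟩ := V_mul k
  rcases h with ⟨A, hA, rfl⟩ | ⟨A, hA, rfl⟩ | ⟨A, hA, rfl⟩
  · exact Or.inr (Or.inl ⟨A, hA, rfl⟩)
  · exact Or.inl ⟨A, hA, by simp [← mul_assoc, HH]⟩
  · refine Or.inr (Or.inr
      ⟨_, hω _ (hω _ (hP _ (hP _ (hP _ (hX _ (hP _ (hP _ (hP _ hA)))))))), ?_⟩)
    have h1 := congrArg (· * (Tg * A)) HPH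
    simp only [mul_assoc, smul_mul_assoc] at h1
    have hPT : ∀ A, Pg * (Tg * A) = Tg * (Pg * A) := fun A => by
      rw [← mul_assoc, PT, mul_assoc]
    have hXT : ∀ A, Xg * (Tg * A) = om • (Tg * (Pg * (Pg * (Pg * (Xg * A))))) := fun A => by
      rw [← mul_assoc, XT]
      simp only [smul_mul_assoc, mul_assoc]
    simp only [h1, hPT, hXT, mul_smul_comm]

lemma W_Pg {k : ℕ} {A : Mat} (h : A ∈ W k) : Pg * A ∈ W k := by
  rcases h with ⟨A, hA, rfl⟩ | h
  · refine Or.inl ⟨_, (V_mul k).2.1 _ hA, ?_⟩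
    simp only [← mul_assoc, PT]
  · exact Or.inr ((V_mul (k + 1)).2.1 _ h)

/-- Normal forms with at most `n` factors `T`. -/
def G : ℕ → Set Mat
  | 0 => Mset 0
  | n + 1 => G n ∪ W n

lemma V_sub_G (n : ℕ) : V n ⊆ G n := by
  cases n with
  | zero => exact subset_rfl
  | succ n => exact fun A hA => Or.inr (Or.inr hA)

lemma G_Hg {n : ℕ} {A : Mat} (h : A ∈ G n) : Hg * A ∈ G n := by
  induction n with
  | zero => exact Hg_mul_mem h
  | succ n ih => exact h.imp ih W_Hg

lemma G_Pg {n : ℕ} {A : Mat} (h : A ∈ G n) : Pg * A ∈ G n := by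
  induction n with
  | zero => exact Pg_mul_mem h
  | succ n ih => exact h.imp ih W_Pg

lemma G_Tg {n : ℕ} {A : Mat} (h : A ∈ G n) : Tg * A ∈ G (n + 1) := by
  induction n with
  | zero => exact Or.inr (Or.inl ⟨A, h, rfl⟩)
  | succ n ih =>
    rcases h with h | ⟨B, hB, rfl⟩ | h
    · exact Or.inl (ih h)
    · simp only [← mul_assoc, TT]
      exact Or.inl (Or.inl (V_sub_G n ((V_mul n).2.1 _ hB)))
    · exact Or.inr (Or.inl ⟨A, h, rfl⟩)

lemma V_sub_Mset (n : ℕ) : V n ⊆ Mset n := by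
  induction n with
  | zero => exact subset_rfl
  | succ n ih =>
    rintro _ (⟨A, hA, rfl⟩ | ⟨A, hA, rfl⟩)
    · exact Hg_mul_mem (Tg_mul_mem (ih hA))
    · exact Pg_mul_mem (Hg_mul_mem (Tg_mul_mem (ih hA)))

lemma G_eq (n : ℕ) : G n = Mset n := by
  apply subset_antisymm
  · induction n with
    | zero => exact subset_rfl
    | succ n ih =>
      rintro A (h | ⟨B, hB, rfl⟩ | h)
      · exact Mset_mono n.le_succ (ih h)
      · exact Tg_mul_mem (V_sub_Mset n hB)
      · exact V_sub_Mset _ h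
  · intro A h
    exact Mset_induction (p := fun n A => A ∈ G n) (one_mem_Mset 0) (fun _ _ => G_Hg)
      (fun _ _ => G_Pg) (fun _ _ => G_Tg) (fun _ _ => Or.inl) h

lemma Mset_succ (n : ℕ) : Mset (n + 1) = Mset n ∪ W n := by
  rw [← G_eq, ← G_eq]
  rfl

/-! ### Denominators of the Bloch sphere rotation -/

/-- The ring `ℤ[√2]`, as an additive group of real numbers. -/
def Zr : AddSubgroup ℝ where
  carrier := {x | ∃ m n : ℤ, x = m + n * √2}
  zero_mem' := ⟨0, 0, by simp⟩
  add_mem' := by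
    rintro _ _ ⟨a, b, rfl⟩ ⟨c, d, rfl⟩
    exact ⟨a + c, b + d, by push_cast; ring⟩
  neg_mem' := by
    rintro _ ⟨a, b, rfl⟩
    exact ⟨-a, -b, by push_cast; ring⟩

lemma one_mem_Zr : (1 : ℝ) ∈ Zr := ⟨1, 0, by simp⟩

lemma sqrt_mul_mem_Zr {x : ℝ} (h : x ∈ Zr) : √2 * x ∈ Zr := by
  obtain ⟨m, n, rfl⟩ := h
  refine ⟨2 * n, m, ?_⟩
  push_cast
  linear_combination (n : ℝ) * Real.mul_self_sqrt (show (0 : ℝ) ≤ 2 by norm_num)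

lemma inv_sqrt_not_mem_Zr : (√2)⁻¹ ∉ Zr := by
  rintro ⟨m, n, h⟩
  have h2 : √2 * √2 = 2 := Real.mul_self_sqrt (by norm_num)
  have h3 : (1 : ℝ) - 2 * n = m * √2 := by
    have : √2 ≠ 0 := by positivity
    field_simp at h
    linear_combination h + n * h2
  -- squaring gives an equation between an odd and an even integer
  have h4 : ((1 - 2 * n) ^ 2 : ℤ) = 2 * m ^ 2 := by
    have : ((1 : ℝ) - 2 * n) ^ 2 = 2 * m ^ 2 := by
      rw [h3]
      linear_combination (m : ℝ) ^ 2 * h2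
    exact_mod_cast this
  have : 2 * (2 * n ^ 2 - 2 * n - m ^ 2) = -1 := by linear_combination h4
  omega

/-- The matrices whose coordinates along the Pauli matrices `X`, `Y`, `Z` lie in `ℤ[√2]`. The
coordinates are read off the first row, which is enough for traceless Hermitian matrices. -/
def L : AddSubgroup Mat where
  carrier := {A | (A 0 1).re ∈ Zr ∧ (A 0 1).im ∈ Zr ∧ (A 0 0).re ∈ Zr}
  zero_mem' := by simp [Zr.zero_mem]
  add_mem' := by
    rintro A B ⟨a, b, c⟩ ⟨a', b', c'⟩
    exact ⟨Zr.add_mem a a', Zr.add_mem b b', Zr.add_mem c c'⟩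
  neg_mem' := by
    rintro A ⟨a, b, c⟩
    exact ⟨Zr.neg_mem a, Zr.neg_mem b, Zr.neg_mem c⟩

lemma mem_L {A : Mat} : A ∈ L ↔ (A 0 1).re ∈ Zr ∧ (A 0 1).im ∈ Zr ∧ (A 0 0).re ∈ Zr := Iff.rfl

lemma sqrt_smul_mem_L {A : Mat} (h : A ∈ L) : (√2 : ℝ) • A ∈ L := by
  obtain ⟨a, b, c⟩ := h
  refine ⟨?_, ?_, ?_⟩
  · simpa using sqrt_mul_mem_Zr a
  · simpa using sqrt_mul_mem_Zr b
  · simpa using sqrt_mul_mem_Zr c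

/-- The lattice `√2⁻ᵏ L`. -/
def Lk (k : ℕ) : AddSubgroup Mat where
  carrier := {A | (√2 ^ k : ℝ) • A ∈ L}
  zero_mem' := by simp [L.zero_mem]
  add_mem' := by
    intro A B a b
    simpa using L.add_mem a b
  neg_mem' := by
    intro A a
    simpa using L.neg_mem a

lemma mem_Lk {k : ℕ} {A : Mat} : A ∈ Lk k ↔ (√2 ^ k : ℝ) • A ∈ L := Iff.rfl

lemma Lk_zero {A : Mat} : A ∈ Lk 0 ↔ A ∈ L := by simp [mem_Lk]

lemma Lk_succ {k : ℕ} {A : Mat} : (√2 : ℝ)⁻¹ • A ∈ Lk (k + 1) ↔ A ∈ Lk k := by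
  rw [mem_Lk, mem_Lk, smul_smul, pow_succ, mul_assoc, mul_inv_cancel₀ (by positivity), mul_one]

lemma Lk_sqrt {k : ℕ} {A : Mat} (h : A ∈ Lk k) : (√2 : ℝ) • A ∈ Lk k := by
  rw [mem_Lk, smul_comm]
  exact sqrt_smul_mem_L h

lemma Lk_mono {k : ℕ} {A : Mat} (h : A ∈ Lk k) : A ∈ Lk (k + 1) := by
  rw [mem_Lk, pow_succ', mul_smul]
  exact sqrt_smul_mem_L h

/-- Conjugation of `A` by `U`. For `A = X, Y, Z` and unitary `U` these are the rows of the rotation of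
the Bloch sphere given by `U`. -/
def R (A U : Mat) : Mat := Uᴴ * A * U

lemma R_prod (A g U : Mat) : R A (g * U) = R (gᴴ * A * g) U := by
  simp [R, Matrix.conjTranspose_mul, mul_assoc]

lemma R_neg (A U : Mat) : R (-A) U = -R A U := by simp [R]

lemma R_XH (U : Mat) : R Xg (Hg * U) = R Zg U := by
  rw [R_prod]
  congr 1
  have h : starRingEnd ℂ sh = sh := Complex.conj_ofReal _
  rw [Hg_eq, Xg, Zg]
  have := sh_sq
  ext i j
  fin_cases i <;> fin_cases j <;> simp [Matrix.mul_apply, Fin.sum_univ_two, h] <;> grind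

lemma R_YH (U : Mat) : R Yg (Hg * U) = -R Yg U := by
  rw [R_prod, ← R_neg]
  congr 1
  have h : starRingEnd ℂ sh = sh := Complex.conj_ofReal _
  rw [Hg_eq, Yg]
  have := sh_sq
  ext i j
  fin_cases i <;> fin_cases j <;> simp [Matrix.mul_apply, Fin.sum_univ_two, h] <;> grind

lemma R_ZH (U : Mat) : R Zg (Hg * U) = R Xg U := by
  rw [R_prod]
  congr 1
  have h : starRingEnd ℂ sh = sh := Complex.conj_ofReal _
  rw [Hg_eq, Xg, Zg]
  have := sh_sq
  ext i j
  fin_cases i <;> fin_cases j <;> simp [Matrix.mul_apply, Fin.sum_univ_two, h] <;> grind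

lemma R_XP (U : Mat) : R Xg (Pg * U) = -R Yg U := by
  rw [R_prod, ← R_neg]
  congr 1
  rw [Pg, Xg, Yg]
  ext i j
  fin_cases i <;> fin_cases j <;> simp [Matrix.mul_apply, Fin.sum_univ_two]

lemma R_YP (U : Mat) : R Yg (Pg * U) = R Xg U := by
  rw [R_prod]
  congr 1
  rw [Pg, Xg, Yg]
  ext i j
  fin_cases i <;> fin_cases j <;> simp [Matrix.mul_apply, Fin.sum_univ_two]

lemma R_ZP (U : Mat) : R Zg (Pg * U) = R Zg U := by
  rw [R_prod]
  congr 1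
  rw [Pg, Zg]
  ext i j
  fin_cases i <;> fin_cases j <;> simp [Matrix.mul_apply, Fin.sum_univ_two]

lemma conj_om : starRingEnd ℂ om = sh * (1 - Complex.I) := by
  have h : starRingEnd ℂ sh = sh := Complex.conj_ofReal _
  rw [om_eq]
  simp only [map_mul, map_add, map_one, h, Complex.conj_I]
  ring

lemma R_XT (U : Mat) : R Xg (Tg * U) = (√2 : ℝ)⁻¹ • (R Xg U - R Yg U) := by
  rw [R_prod]
  have : Tgᴴ * Xg * Tg = (√2 : ℝ)⁻¹ • (Xg - Yg) := by
    rw [Tg_eq, Xg, Yg]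
    ext i j
    fin_cases i <;> fin_cases j <;>
      simp [Matrix.mul_apply, Fin.sum_univ_two, om_eq, sh] <;> ring_nf
  rw [this]
  simp [R, mul_sub, sub_mul]

lemma R_YT (U : Mat) : R Yg (Tg * U) = (√2 : ℝ)⁻¹ • (R Xg U + R Yg U) := by
  rw [R_prod]
  have : Tgᴴ * Yg * Tg = (√2 : ℝ)⁻¹ • (Xg + Yg) := by
    rw [Tg_eq, Xg, Yg]
    have := Complex.I_sq
    ext i j
    fin_cases i <;> fin_cases j <;>
      simp [Matrix.mul_apply, Fin.sum_univ_two, om_eq, sh] <;> grind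
  rw [this]
  simp [R, mul_add, add_mul]

lemma R_ZT (U : Mat) : R Zg (Tg * U) = R Zg U := by
  rw [R_prod]
  congr 1
  have h : starRingEnd ℂ om * om = 1 := by
    rw [conj_om, om_eq]
    linear_combination (1 - Complex.I ^ 2) * sh_sq - (1 / 2) * Complex.I_sq
  rw [Tg_eq, Zg]
  ext i j
  fin_cases i <;> fin_cases j <;> simp [Matrix.mul_apply, Fin.sum_univ_two, h]

lemma Pauli_mem_L : Xg ∈ L ∧ Yg ∈ L ∧ Zg ∈ L := by
  have h0 := Zr.zero_mem
  have h1 := one_mem_Zr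
  refine ⟨?_, ?_, ?_⟩ <;> simp [mem_L, Xg, Yg, Zg, h0, h1]

/-- A product with at most `n` factors `T` has a Bloch sphere rotation with denominator `√2ⁿ`. -/
lemma Mset_bloch {n : ℕ} {U : Mat} (h : U ∈ Mset n) :
    R Xg U ∈ Lk n ∧ R Yg U ∈ Lk n ∧ R Zg U ∈ Lk n := by
  refine Mset_induction (p := fun n U => R Xg U ∈ Lk n ∧ R Yg U ∈ Lk n ∧ R Zg U ∈ Lk n)
    ?_ ?_ ?_ ?_ ?_ h
  · simpa [R, Lk_zero] using Pauli_mem_L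
  · rintro n A ⟨hX, hY, hZ⟩
    rw [R_XH, R_YH, R_ZH]
    exact ⟨hZ, neg_mem hY, hX⟩
  · rintro n A ⟨hX, hY, hZ⟩
    rw [R_XP, R_YP, R_ZP]
    exact ⟨neg_mem hY, hX, hZ⟩
  · rintro n A ⟨hX, hY, hZ⟩
    rw [R_XT, R_YT, R_ZT, Lk_succ, Lk_succ]
    exact ⟨sub_mem hX hY, add_mem hX hY, Lk_mono hZ⟩
  · rintro n A ⟨hX, hY, hZ⟩
    exact ⟨Lk_mono hX, Lk_mono hY, Lk_mono hZ⟩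

/-- Modulo `√2` the sign of a summand in `√2⁻ᵏ L` does not matter. -/
lemma half_add_iff {k : ℕ} {A B : Mat} (hB : B ∈ Lk k) :
    (√2 : ℝ)⁻¹ • (A + B) ∈ Lk k ↔ (√2 : ℝ)⁻¹ • (A - B) ∈ Lk k := by
  have e : (√2 : ℝ)⁻¹ • (A + B) = (√2 : ℝ)⁻¹ • (A - B) + (√2 : ℝ) • B := by
    have h2 : (√2 : ℝ) = (√2 : ℝ)⁻¹ * 2 := by
      have h : √2 * √2 = 2 := Real.mul_self_sqrt (by norm_num)
      field_simp
      nlinarith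
    have h3 : (√2 : ℝ) • B = (√2 : ℝ)⁻¹ • ((2 : ℝ) • B) := by rw [smul_smul, ← h2]
    rw [h3, ← smul_add, two_smul]
    congr 1
    abel
  rw [e]
  exact AddSubgroup.add_mem_cancel_right _ (Lk_sqrt hB)

lemma half_sub_comm {k : ℕ} {A B : Mat} :
    (√2 : ℝ)⁻¹ • (A - B) ∈ Lk k ↔ (√2 : ℝ)⁻¹ • (B - A) ∈ Lk k := by
  rw [← neg_sub, smul_neg, neg_mem_iff]

/-- The case `k = 0` of `V_bloch`. It is proved by showing that all three rows of the rotation given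
by a Clifford matrix are pairwise incongruent modulo `√2`. -/
lemma clifford_bloch {U : Mat} (h : U ∈ Mset 0) :
    (√2 : ℝ)⁻¹ • (R Xg U - R Yg U) ∉ Lk 0 := by
  -- only the case of no factor `T` carries information, hence the condition `n = 0`
  have key := Mset_induction (p := fun n U => n = 0 →
    (R Xg U ∈ Lk 0 ∧ R Yg U ∈ Lk 0 ∧ R Zg U ∈ Lk 0) ∧
    (√2 : ℝ)⁻¹ • (R Xg U - R Yg U) ∉ Lk 0 ∧ (√2 : ℝ)⁻¹ • (R Yg U - R Zg U) ∉ Lk 0 ∧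
    (√2 : ℝ)⁻¹ • (R Xg U - R Zg U) ∉ Lk 0) ?_ ?_ ?_ ?_ ?_ h
  · exact (key rfl).2.1
  · intro _
    have h1 : √2 / 2 ∉ Zr := by
      have e : √2 / 2 = (√2)⁻¹ := by
        have h : √2 * √2 = 2 := Real.mul_self_sqrt (by norm_num)
        field_simp
        nlinarith
      rw [e]
      exact inv_sqrt_not_mem_Zr
    refine ⟨by simpa [R, Lk_zero] using Pauli_mem_L, ?_, ?_, ?_⟩ <;>
      simp [R, Lk_zero, mem_L, Xg, Yg, Zg, h1]
  · intro n A hA hn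
    obtain ⟨⟨hX, hY, hZ⟩, a, b, c⟩ := hA hn
    rw [R_XH, R_YH, R_ZH]
    refine ⟨⟨hZ, neg_mem hY, hX⟩, ?_, ?_, ?_⟩
    · rwa [sub_neg_eq_add, half_add_iff hY, half_sub_comm]
    · rwa [← neg_add', smul_neg, neg_mem_iff, add_comm, half_add_iff hY]
    · rwa [half_sub_comm]
  · intro n A hA hn
    obtain ⟨⟨hX, hY, hZ⟩, a, b, c⟩ := hA hn
    rw [R_XP, R_YP, R_ZP]
    refine ⟨⟨neg_mem hY, hX, hZ⟩, ?_, c, ?_⟩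
    · rwa [← neg_add', smul_neg, neg_mem_iff, add_comm, half_add_iff hY]
    · rwa [← neg_add', smul_neg, neg_mem_iff, half_add_iff hZ]
  · simp
  · simp

lemma not_half_of_mem {k : ℕ} {A B : Mat} (hA : A ∈ Lk k) (hB : B ∉ Lk k) :
    A - B ∉ Lk k := fun h => hB (by simpa using sub_mem hA h)

lemma TV_bloch_aux {k : ℕ} {U : Mat} (h : U ∈ Mset k)
    (hU : (√2 : ℝ)⁻¹ • (R Xg U - R Yg U) ∉ Lk k) :
    R Xg (Tg * U) ∉ Lk k ∧ R Yg (Tg * U) ∉ Lk k ∧ R Zg (Tg * U) ∈ Lk k := by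
  obtain ⟨hX, hY, hZ⟩ := Mset_bloch h
  rw [R_XT, R_YT, R_ZT, half_add_iff hY]
  exact ⟨hU, hU, hZ⟩

/-- For normal forms not starting with a bare `T`, the first two rows are incongruent modulo `√2`,
after scaling to the lattice `√2⁻ᵏ L`. -/
lemma V_bloch {k : ℕ} {U : Mat} (h : U ∈ V k) : (√2 : ℝ)⁻¹ • (R Xg U - R Yg U) ∉ Lk k := by
  induction k generalizing U with
  | zero => exact clifford_bloch h
  | succ k ih =>
    rw [Lk_succ]
    rcases h with ⟨A, hA, rfl⟩ | ⟨A, hA, rfl⟩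
    · obtain ⟨a, b, c⟩ := TV_bloch_aux (V_sub_Mset k hA) (ih hA)
      simp only [R_XH, R_YH]
      exact not_half_of_mem c (by rwa [neg_mem_iff])
    · obtain ⟨a, b, c⟩ := TV_bloch_aux (V_sub_Mset k hA) (ih hA)
      simp only [R_XP, R_YP, R_XH, R_YH, neg_neg]
      rw [← neg_sub, neg_mem_iff]
      exact not_half_of_mem c b

/-- The third row is the only one in `√2⁻ᵏ L`. Since `H` and `P` permute the rows up to sign, this
tells apart `T·V k`, `HT·V k` and `PHT·V k`. -/
lemma TV_bloch {k : ℕ} {U : Mat} (h : U ∈ V k) :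
    R Xg (Tg * U) ∉ Lk k ∧ R Yg (Tg * U) ∉ Lk k ∧ R Zg (Tg * U) ∈ Lk k :=
  TV_bloch_aux (V_sub_Mset k h) (V_bloch h)

/-! ### Counting normal forms -/

lemma encard_V_succ (k : ℕ) : (V (k + 1)).encard = (V k).encard + (V k).encard := by
  have e : V (k + 1) = (fun A => Hg * (Tg * A)) '' V k ∪ (fun A => Pg * (Hg * (Tg * A))) '' V k :=
    rfl
  rw [e, Set.encard_union_eq]
  · rw [HT_inj.encard_image, PHT_inj.encard_image]
  · rw [Set.disjoint_left]
    rintro _ ⟨A, hA, rfl⟩ ⟨B, hB, e⟩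
    obtain ⟨a, b, c⟩ := TV_bloch hA
    obtain ⟨a', b', c'⟩ := TV_bloch hB
    have := congrArg (R Xg) e
    simp only [R_XP, R_XH, R_YH, neg_neg] at this
    exact b' (this ▸ c)

lemma encard_W (k : ℕ) : (W k).encard = (V k).encard + (V (k + 1)).encard := by
  rw [W, Set.encard_union_eq, Tg_inj.encard_image]
  rw [Set.disjoint_left]
  rintro _ ⟨A, hA, rfl⟩ h
  obtain ⟨a, b, c⟩ := TV_bloch hA
  -- in `HT·V k` and `PHT·V k` the third row is, up to sign, a row of `T·V k` outside the lattice
  rcases h with ⟨B, hB, e⟩ | ⟨B, hB, e⟩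
  all_goals
    obtain ⟨a', b', c'⟩ := TV_bloch hB
    have := congrArg (R Zg) e
    simp only [R_ZP, R_ZH] at this
    exact a' (this ▸ c)

lemma encard_Mset_succ (n : ℕ) :
    (Mset (n + 1)).encard = (Mset n).encard + (W n).encard := by
  rw [Mset_succ, Set.encard_union_eq]
  rw [Set.disjoint_left]
  rintro U hU h
  obtain ⟨hX, hY, hZ⟩ := Mset_bloch hU
  rcases h with ⟨A, hA, rfl⟩ | ⟨A, hA, rfl⟩ | ⟨A, hA, rfl⟩
  · exact (TV_bloch hA).1 hX
  · simp only [R_ZH] at hZ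
    exact (TV_bloch hA).1 hZ
  · simp only [R_ZP, R_ZH] at hZ
    exact (TV_bloch hA).1 hZ

/-! ### The order of the Clifford group -/

/-- Diagonal matrices with entries `u` and `uw`. -/
def dg (p : ℂ × ℂ) : Mat := !![p.1, 0; 0, p.1 * p.2]

/-- Antidiagonal matrices with entries `u` and `uw`. -/
def ad (p : ℂ × ℂ) : Mat := !![0, p.1; p.1 * p.2, 0]

/-- Pairs `(u, w)` with `u⁸ = 1` and `w⁴ = 1`. -/
def prs : Finset (ℂ × ℂ) := Polynomial.nthRootsFinset 8 (1 : ℂ) ×ˢ Polynomial.nthRootsFinset 4 (1 : ℂ)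

lemma mem_prs {p : ℂ × ℂ} : p ∈ prs ↔ p.1 ^ 8 = 1 ∧ p.2 ^ 4 = 1 := by
  simp [prs, Polynomial.mem_nthRootsFinset]

lemma I_prim : IsPrimitiveRoot Complex.I 4 := by
  rw [← om_sq]
  exact om_prim.pow (by norm_num) (by norm_num)

lemma card_prs : prs.card = 32 := by
  rw [prs, Finset.card_product, om_prim.card_nthRootsFinset, I_prim.card_nthRootsFinset]

/-- The monomial Clifford matrices. -/
def D : Set Mat := dg '' (prs : Set (ℂ × ℂ)) ∪ ad '' (prs : Set (ℂ × ℂ))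

lemma ne_zero_of_mem_prs {p : ℂ × ℂ} (h : p ∈ prs) : p.1 ≠ 0 ∧ p.2 ≠ 0 := by
  rw [mem_prs] at h
  constructor
  · rintro h0
    simp [h0] at h
  · rintro h0
    simp [h0] at h

lemma encard_D : D.encard = 64 := by
  have hd : Set.InjOn dg (prs : Set (ℂ × ℂ)) := by
    intro p hp q hq e
    have h1 : p.1 = q.1 := by simpa [dg] using congrFun (congrFun e 0) 0
    have h2 : p.1 * p.2 = q.1 * q.2 := by simpa [dg] using congrFun (congrFun e 1) 1
    rw [← h1] at h2
    exact Prod.ext h1 (mul_left_cancel₀ (ne_zero_of_mem_prs hp).1 h2)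
  have ha : Set.InjOn ad (prs : Set (ℂ × ℂ)) := by
    intro p hp q hq e
    have h1 : p.1 = q.1 := by simpa [ad] using congrFun (congrFun e 0) 1
    have h2 : p.1 * p.2 = q.1 * q.2 := by simpa [ad] using congrFun (congrFun e 1) 0
    rw [← h1] at h2
    exact Prod.ext h1 (mul_left_cancel₀ (ne_zero_of_mem_prs hp).1 h2)
  rw [D, Set.encard_union_eq, hd.encard_image, ha.encard_image, Set.encard_coe_eq_coe_finsetCard,
    card_prs]
  · norm_num
  · rw [Set.disjoint_left]
    rintro _ ⟨p, hp, rfl⟩ ⟨q, hq, e⟩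
    have h1 : 0 = p.1 := by simpa [dg, ad] using congrFun (congrFun e 0) 0
    exact (ne_zero_of_mem_prs hp).1 h1.symm

lemma D_om {A : Mat} (h : A ∈ D) : om • A ∈ D := by
  have ho := om_prim.pow_eq_one
  rcases h with ⟨p, hp, rfl⟩ | ⟨p, hp, rfl⟩
  · refine Or.inl ⟨(om * p.1, p.2), ?_, ?_⟩
    · rw [Finset.mem_coe, mem_prs] at *
      simp [mul_pow, ho, hp]
    · ext i j
      fin_cases i <;> fin_cases j <;> simp [dg, mul_assoc]
  · refine Or.inr ⟨(om * p.1, p.2), ?_, ?_⟩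
    · rw [Finset.mem_coe, mem_prs] at *
      simp [mul_pow, ho, hp]
    · ext i j
      fin_cases i <;> fin_cases j <;> simp [ad, mul_assoc]

lemma D_Pg {A : Mat} (h : A ∈ D) : Pg * A ∈ D := by
  rcases h with ⟨p, hp, rfl⟩ | ⟨p, hp, rfl⟩
  · refine Or.inl ⟨(p.1, Complex.I * p.2), ?_, ?_⟩
    · rw [Finset.mem_coe, mem_prs] at *
      simp [mul_pow, hp]
    · ext i j
      fin_cases i <;> fin_cases j <;> simp [dg, Pg]
      ring
  · refine Or.inr ⟨(p.1, Complex.I * p.2), ?_, ?_⟩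
    · rw [Finset.mem_coe, mem_prs] at *
      simp [mul_pow, hp]
    · ext i j
      fin_cases i <;> fin_cases j <;> simp [ad, Pg]
      ring

lemma D_Xg {A : Mat} (h : A ∈ D) : Xg * A ∈ D := by
  -- exchanging the rows turns the pair `(u, w)` into `(uw, w⁻¹)`
  have key : ∀ p ∈ prs, (p.1 * p.2, p.2⁻¹) ∈ prs := by
    intro p hp
    rw [mem_prs] at *
    have : p.2 ^ 8 = 1 := by
      rw [show 8 = 4 * 2 from rfl, pow_mul, hp.2, one_pow]
    simp [mul_pow, hp, this]
  rcases h with ⟨p, hp, rfl⟩ | ⟨p, hp, rfl⟩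
  · refine Or.inr ⟨_, key p hp, ?_⟩
    have := (ne_zero_of_mem_prs hp).2
    ext i j
    fin_cases i <;> fin_cases j <;> simp [dg, ad, Xg, this]
  · refine Or.inl ⟨_, key p hp, ?_⟩
    have := (ne_zero_of_mem_prs hp).2
    ext i j
    fin_cases i <;> fin_cases j <;> simp [dg, ad, Xg, this]

lemma D_sub : D ⊆ Mset 0 := by
  have hω : ∀ (n : ℕ) (A : Mat), A ∈ Mset 0 → om ^ n • A ∈ Mset 0 := by
    intro n A hA
    induction n with
    | zero => simpa using hA
    | succ n ih =>
      rw [pow_succ', mul_smul]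
      exact om_smul_mem ih
  have hP : ∀ (n : ℕ) (A : Mat), A ∈ Mset 0 → Pg ^ n * A ∈ Mset 0 := by
    intro n A hA
    induction n with
    | zero => simpa using hA
    | succ n ih =>
      rw [pow_succ', mul_assoc]
      exact Pg_mul_mem ih
  have hPn : ∀ n : ℕ, Pg ^ n = !![1, 0; 0, Complex.I ^ n] := by
    intro n
    induction n with
    | zero => simp [Matrix.one_fin_two]
    | succ n ih =>
      rw [pow_succ, ih, Pg]
      simp [pow_succ]
  rintro _ (⟨p, hp, rfl⟩ | ⟨p, hp, rfl⟩)
  all_goals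
    obtain ⟨h8, h4⟩ := mem_prs.1 hp
    obtain ⟨a, -, ha⟩ := om_prim.eq_pow_of_pow_eq_one h8
    obtain ⟨b, -, hb⟩ := I_prim.eq_pow_of_pow_eq_one h4
  · have e : dg p = om ^ a • (Pg ^ b * 1) := by
      rw [hPn, dg, ← ha, ← hb]
      ext i j
      fin_cases i <;> fin_cases j <;> simp
    rw [e]
    exact hω _ _ (hP _ _ (one_mem_Mset 0))
  · have e : ad p = om ^ a • (Pg ^ b * (Xg * 1)) := by
      rw [hPn, ad, ← ha, ← hb, Xg]
      ext i j
      fin_cases i <;> fin_cases j <;> simp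
    rw [e]
    exact hω _ _ (hP _ _ (Xg_mul_mem (one_mem_Mset 0)))

lemma Mset_zero :
    Mset 0 = D ∪ ((fun A => Hg * A) '' D ∪ (fun A => Pg * (Hg * A)) '' D) := by
  apply subset_antisymm
  · intro A hA
    refine Mset_induction (p := fun n A => n = 0 →
      A ∈ D ∪ ((fun A => Hg * A) '' D ∪ (fun A => Pg * (Hg * A)) '' D)) ?_ ?_ ?_ ?_ ?_ hA rfl
    · intro _
      refine Or.inl (Or.inl ⟨(1, 1), by simp [mem_prs], ?_⟩)
      simp [dg, Matrix.one_fin_two]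
    · intro n A ih hn
      rcases ih hn with h | ⟨B, hB, rfl⟩ | ⟨B, hB, rfl⟩
      · exact Or.inr (Or.inl ⟨A, h, rfl⟩)
      · refine Or.inl ?_
        simpa [← mul_assoc, HH] using hB
      · refine Or.inr (Or.inr ⟨_, D_om (D_Xg (D_Pg (D_Pg (D_Pg hB)))), ?_⟩)
        have h1 := congrArg (· * B) HPH
        simp only [mul_assoc, smul_mul_assoc] at h1
        simp only [h1, mul_smul_comm]
    · intro n A ih hn
      rcases ih hn with h | ⟨B, hB, rfl⟩ | ⟨B, hB, rfl⟩
      · exact Or.inl (D_Pg h)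
      · exact Or.inr (Or.inr ⟨B, hB, rfl⟩)
      · refine Or.inr (Or.inl ⟨_, D_Xg hB, ?_⟩)
        have h1 := congrArg (· * B) PPH
        simp only [mul_assoc] at h1
        simp only [h1]
    · simp
    · simp
  · rintro _ (h | ⟨A, hA, rfl⟩ | ⟨A, hA, rfl⟩)
    · exact D_sub h
    · exact Hg_mul_mem (D_sub hA)
    · exact Pg_mul_mem (Hg_mul_mem (D_sub hA))

/-- The first column `(a, b)` of a matrix in `D` has `a² ≠ ± b²`. -/
lemma D_col {A : Mat} (h : A ∈ D) : A 0 0 ^ 2 ≠ A 1 0 ^ 2 ∧ A 0 0 ^ 2 ≠ -A 1 0 ^ 2 := by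
  rcases h with ⟨p, hp, rfl⟩ | ⟨p, hp, rfl⟩ <;> obtain ⟨h1, h2⟩ := ne_zero_of_mem_prs hp <;>
    simp [dg, ad, h1, h2, (pow_ne_zero 2 (mul_ne_zero h1 h2)).symm]

/-- The first column `(a, b)` of a matrix in `HD` has `a² = b² ≠ 0`. -/
lemma HD_col {A : Mat} (h : A ∈ D) :
    (Hg * A) 0 0 ^ 2 = (Hg * A) 1 0 ^ 2 ∧ (Hg * A) 0 0 ≠ 0 := by
  rcases h with ⟨p, hp, rfl⟩ | ⟨p, hp, rfl⟩ <;> obtain ⟨h1, h2⟩ := ne_zero_of_mem_prs hp <;>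
    simp [dg, ad, h1, h2, Hg_eq, sh_ne]

/-- The first column `(a, b)` of a matrix in `PHD` has `a² = -b²`. -/
lemma PHD_col {A : Mat} (h : A ∈ D) :
    (Pg * (Hg * A)) 0 0 ^ 2 = -(Pg * (Hg * A)) 1 0 ^ 2 := by
  have h1 := (HD_col h).1
  have e0 : (Pg * (Hg * A)) 0 0 = (Hg * A) 0 0 := by
    rw [Matrix.mul_apply, Fin.sum_univ_two]
    simp [Pg]
  have e1 : (Pg * (Hg * A)) 1 0 = Complex.I * (Hg * A) 1 0 := by
    rw [Matrix.mul_apply, Fin.sum_univ_two]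
    simp [Pg]
  rw [e0, e1, h1, mul_pow, Complex.I_sq]
  ring

lemma encard_Mset_zero : (Mset 0).encard = 192 := by
  rw [Mset_zero, Set.encard_union_eq, Set.encard_union_eq, Hg_inj.encard_image,
    PH_inj.encard_image, encard_D]
  · norm_num
  · rw [Set.disjoint_left]
    rintro _ ⟨A, hA, rfl⟩ ⟨B, hB, e⟩
    have h1 := PHD_col hB
    obtain ⟨h2, h3⟩ := HD_col hA
    simp only at e
    rw [e, h2] at h1
    have h4 : (Hg * A) 1 0 ^ 2 = 0 := by linear_combination (1 / 2) * h1
    rw [h4] at h2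
    exact h3 (pow_eq_zero_iff (by norm_num) |>.1 h2)
  · rw [Set.disjoint_left]
    rintro _ h (⟨B, hB, rfl⟩ | ⟨B, hB, rfl⟩)
    · exact (D_col h).1 (HD_col hB).1
    · exact (D_col h).2 (PHD_col hB)

lemma encard_V (k : ℕ) : (V k).encard = ((192 * 2 ^ k : ℕ) : ℕ∞) := by
  induction k with
  | zero => simpa [V] using encard_Mset_zero
  | succ k ih =>
    rw [encard_V_succ, ih, ← Nat.cast_add]
    congr 1
    ring

lemma encard_Mset (n : ℕ) : (Mset n).encard = ((192 * (3 * 2 ^ n - 2) : ℕ) : ℕ∞) := by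
  induction n with
  | zero => simpa using encard_Mset_zero
  | succ n ih =>
    rw [encard_Mset_succ, encard_W, ih, encard_V, encard_V, ← Nat.cast_add, ← Nat.cast_add]
    congr 1
    have := Nat.one_le_two_pow (n := n)
    rw [pow_succ]
    omega

/-- |Mₙ| = 192·(3·2ⁿ − 2). -/
theorem card_Mset (n : ℕ) : Nat.card (Mset n) = 192 * (3 * 2 ^ n - 2) := by
  rw [Nat.card_coe_set_eq, Set.ncard, encard_Mset, ENat.toNat_natCast]
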